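/- arXiv:2603.00982 — 2 statements merged into one kernel-verified Lean document; each statement's English description precedes it below -/
import Mathlib

section
/- Suppose c < 0 and 0 < γ < h. For each sufficiently small α > 0 let Z(α) ≥ 0 be a solution of the steady-state robust-queueing fixed-point equation Z(α) = sup_{u ≥ 0} { ρ(α)u − u/F̄(α·Z(α)) + b·√(ρ(α)·u·I_w(λ(α)u)/μ) }. Then lim_{α↓0} (−c)·μ·α^γ·Z(α) = b²·c_x²/4; equivalently, lim_{α↓0} (1 − ρ(α))·Z(α) = b²·c_x²/(4μ). -/
/-!
Measured in the mean number `t = ρ μ u` of arrivals, the supremum becomes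
`Z = sup_{t ≥ 0} (g(t) - η t)` with a function `g(t) = (b / μ) √(t I_w(t)) ~ (b c_x / μ) √t` that
depends neither on `α` nor on `Z`; all such dependence sits in the slope
`η = (1 / F̄(α Z) - ρ) / (ρ μ) ≥ (1 - ρ) / μ`. If `g(t) ~ σ √t`, then this supremum is
asymptotic to `σ² / (4 η)` as `η ↓ 0`, which is the theorem as soon as `η ~ (1 - ρ) / μ`, that is,
as soon as `F(α Z) = o(1 - ρ)`. The lower bound on `η` alone gives `Z = O(1 / (1 - ρ)) = O(α^{-γ})`,
whence `F(α Z) = O(α^{(1 - γ) k})`, and `(1 - γ) k > γ` is exactly `γ < k / (k + 1)`.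
-/

open Filter Set Topology Asymptotics

theorem isLUB_range_of_coe_eq_iSup {ι : Sort*} {f : ι → ℝ} {z : ℝ}
    (h : (z : EReal) = ⨆ i, (f i : EReal)) : IsLUB (range f) z := by
  refine IsLUB.of_image EReal.coe_le_coe_iff ?_
  rw [← range_comp, h]
  exact isLUB_iSup

section SupSubLinear

theorem mul_sqrt_sub_mul_le {η t : ℝ} (s : ℝ) (hη : 0 < η) (ht : 0 ≤ t) :
    s * √t - η * t ≤ s ^ 2 / (4 * η) := by
  rw [le_div_iff₀ (by positivity)]
  have hsq := sq_nonneg (2 * η * √t - s)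
  rw [sub_sq, mul_pow, Real.sq_sqrt ht] at hsq
  linarith

theorem exists_forall_le_add_mul_sqrt {g : ℝ → ℝ} {s η : ℝ} (hs : 0 ≤ s)
    (hg : ∀ᶠ t in atTop, g t ≤ s * √t) (hbdd : BddAbove ((fun t => g t - η * t) '' Ici 0)) :
    ∃ K, ∀ t, 0 ≤ t → g t ≤ K + s * √t := by
  obtain ⟨B, hB⟩ := hbdd
  obtain ⟨M, hM⟩ := eventually_atTop.1 hg
  refine ⟨max 0 (B + |η| * M), fun t ht => ?_⟩
  rcases le_total M t with hMt | htM
  · linarith [hM t hMt, le_max_left 0 (B + |η| * M)]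
  · have hgt : g t - η * t ≤ B := hB ⟨t, ht, rfl⟩
    have hηt : η * t ≤ |η| * M := mul_le_mul (le_abs_self η) htM ht (abs_nonneg η)
    have hst : 0 ≤ s * √t := by positivity
    linarith [le_max_right 0 (B + |η| * M)]

variable {ι : Type*} {l : Filter ι} {g : ℝ → ℝ} {σ : ℝ} {η z : ι → ℝ}

theorem eventually_mul_lt_of_isLUB_sub_mul {θ : ι → ℝ} {a : ℝ}
    (hg : Tendsto (fun t => g t / √t) atTop (𝓝 σ)) (hσ : 0 ≤ σ)
    (hθ : Tendsto θ l (𝓝[>] 0)) (hθη : ∀ᶠ i in l, θ i ≤ η i)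
    (hz : ∀ᶠ i in l, IsLUB ((fun t => g t - η i * t) '' Ici 0) (z i)) (ha : σ ^ 2 / 4 < a) :
    ∀ᶠ i in l, θ i * z i < a := by
  rcases l.eq_or_neBot with rfl | _
  · exact eventually_bot
  obtain ⟨s, hσs, hsa⟩ : ∃ s, σ < s ∧ s ^ 2 / 4 < a := by
    have hev : ∀ᶠ s in 𝓝 σ, s ^ 2 / 4 < a :=
      (show Continuous fun s : ℝ => s ^ 2 / 4 by fun_prop).continuousAt.eventually_lt_const ha
    exact (eventually_mem_nhdsWithin.and (hev.filter_mono nhdsWithin_le_nhds)).exists (f := 𝓝[>] σ)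
  -- A single finite supremum `z i₀` already bounds `g` on compact sets.
  obtain ⟨i₀, hi₀⟩ := hz.exists
  have hgs : ∀ᶠ t in atTop, g t ≤ s * √t := by
    filter_upwards [hg.eventually_lt_const hσs, eventually_gt_atTop 0] with t hlt ht
    exact ((div_lt_iff₀ (Real.sqrt_pos.2 ht)).1 hlt).le
  obtain ⟨K, hK⟩ := exists_forall_le_add_mul_sqrt (hσ.trans hσs.le) hgs ⟨z i₀, hi₀.1⟩
  have hlim : Tendsto (fun i => θ i * K + s ^ 2 / 4) l (𝓝 (0 * K + s ^ 2 / 4)) :=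
    ((hθ.mono_right nhdsWithin_le_nhds).mul_const K).add_const _
  rw [zero_mul, zero_add] at hlim
  filter_upwards [hθ.eventually_mem self_mem_nhdsWithin, hθη, hz, hlim.eventually_lt_const hsa]
    with i (hθi : 0 < θ i) hθηi hzi hlt
  refine lt_of_le_of_lt ?_ hlt
  have hzK : z i ≤ K + s ^ 2 / (4 * θ i) := by
    refine hzi.2 ?_
    rintro _ ⟨t, ht, rfl⟩
    linarith [hK t ht, mul_sqrt_sub_mul_le s hθi ht, mul_le_mul_of_nonneg_right hθηi ht]
  calc θ i * z i ≤ θ i * (K + s ^ 2 / (4 * θ i)) := by gcongr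
    _ = θ i * K + s ^ 2 / 4 := by field_simp

-- The maximiser of `σ √t - η t` is `t = (σ / (2 η)) ^ 2`.
theorem tendsto_mul_sub_mul_at_maximiser (hg : Tendsto (fun t => g t / √t) atTop (𝓝 σ))
    (hσ : 0 < σ) (hη : Tendsto η l (𝓝[>] 0)) :
    Tendsto (fun i => η i * (g ((σ / (2 * η i)) ^ 2) - η i * (σ / (2 * η i)) ^ 2)) l
      (𝓝 (σ ^ 2 / 4)) := by
  have hmax : Tendsto (fun i => (σ / (2 * η i)) ^ 2) l atTop := by
    have h : Tendsto (fun i => σ / 2 * (η i)⁻¹) l atTop :=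
      (tendsto_inv_nhdsGT_zero.comp hη).const_mul_atTop (half_pos hσ)
    refine ((tendsto_pow_atTop two_ne_zero).comp h).congr fun i => ?_
    simp only [Function.comp_apply, div_eq_mul_inv, mul_inv, mul_assoc]
  have hlim := ((hg.comp hmax).const_mul (σ / 2)).sub_const (σ ^ 2 / 4)
  rw [show σ / 2 * σ - σ ^ 2 / 4 = σ ^ 2 / 4 by ring] at hlim
  refine hlim.congr' ?_
  filter_upwards [hη.eventually_mem self_mem_nhdsWithin] with i (hi : 0 < η i)
  rw [Function.comp_apply, Real.sqrt_sq (by positivity)]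
  field_simp
  ring

theorem tendsto_mul_of_isLUB_sub_mul (hg : Tendsto (fun t => g t / √t) atTop (𝓝 σ))
    (hσ : 0 < σ) (hη : Tendsto η l (𝓝[>] 0))
    (hz : ∀ᶠ i in l, IsLUB ((fun t => g t - η i * t) '' Ici 0) (z i)) :
    Tendsto (fun i => η i * z i) l (𝓝 (σ ^ 2 / 4)) := by
  refine tendsto_order.2 ⟨fun a ha => ?_, fun a ha =>
    eventually_mul_lt_of_isLUB_sub_mul hg hσ.le hη (.of_forall fun _ => le_rfl) hz ha⟩
  filter_upwards [(tendsto_mul_sub_mul_at_maximiser hg hσ hη).eventually_const_lt ha,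
    hη.eventually_mem self_mem_nhdsWithin, hz] with i hlt (hi : 0 < η i) hzi
  exact hlt.trans_le (mul_le_mul_of_nonneg_left (hzi.1 ⟨_, sq_nonneg (σ / (2 * η i)), rfl⟩) hi.le)

end SupSubLinear

section RobustQueueing

/-- The function maximised over `u ≥ 0` in the steady-state robust-queueing equation, at traffic
intensity `ρ` and abandonment probability `p`; the equation itself takes `p = F(α Z)`. -/
noncomputable def rqObjective (Iw : ℝ → ℝ) (μ b ρ p u : ℝ) : ℝ :=
  ρ * u - u / (1 - p) + b * √(ρ * u * Iw (ρ * μ * u) / μ)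

/-- The stochastic deviation term of the robust-queueing objective, as a function of the mean
number `t = ρ μ u` of arrivals, in which it no longer involves the traffic intensity (`g` above). -/
noncomputable def rqDeviation (Iw : ℝ → ℝ) (μ b t : ℝ) : ℝ :=
  b / μ * √(t * Iw t)

/-- The net rate of decrease, per arrival, of the linear part of the robust-queueing objective
(`η` above). -/
noncomputable def rqDrift (μ ρ p : ℝ) : ℝ :=
  ((1 - p)⁻¹ - ρ) / (ρ * μ)

variable {Iw : ℝ → ℝ} {μ b cx2 : ℝ}

theorem rqObjective_eq_rqDeviation_sub {ρ : ℝ} (hμ : 0 < μ) (hρ : ρ ≠ 0) (p u : ℝ) :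
    rqObjective Iw μ b ρ p u
      = rqDeviation Iw μ b (ρ * μ * u) - rqDrift μ ρ p * (ρ * μ * u) := by
  have hsqrt : √(ρ * u * Iw (ρ * μ * u) / μ) = √(ρ * μ * u * Iw (ρ * μ * u)) / μ := by
    rw [← Real.sqrt_sq hμ.le, ← Real.sqrt_div' _ (sq_nonneg μ), Real.sqrt_sq hμ.le]
    congr 1
    field_simp
  rw [rqObjective, rqDeviation, rqDrift, hsqrt]
  field_simp
  ring

theorem rqObjective_image_Ici {ρ : ℝ} (hμ : 0 < μ) (hρ : 0 < ρ) (p : ℝ) :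
    rqObjective Iw μ b ρ p '' Ici 0
      = (fun t => rqDeviation Iw μ b t - rqDrift μ ρ p * t) '' Ici 0 := by
  have hcomp : rqObjective Iw μ b ρ p
      = (fun t => rqDeviation Iw μ b t - rqDrift μ ρ p * t) ∘ (ρ * μ * ·) :=
    funext (rqObjective_eq_rqDeviation_sub hμ hρ.ne' p)
  rw [hcomp, image_comp, image_mul_left_Ici (mul_pos hρ hμ), mul_zero]

theorem tendsto_rqDeviation_div_sqrt (hIw : Tendsto Iw atTop (𝓝 cx2)) :
    Tendsto (fun t => rqDeviation Iw μ b t / √t) atTop (𝓝 (b / μ * √cx2)) := by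
  refine (hIw.sqrt.const_mul (b / μ)).congr' ?_
  filter_upwards [eventually_gt_atTop 0] with t ht
  have := Real.sqrt_pos.2 ht
  rw [rqDeviation, Real.sqrt_mul ht.le]
  field_simp

theorem one_sub_div_le_rqDrift {ρ p : ℝ} (hμ : 0 < μ) (hρ : ρ ∈ Ioo 0 1) (hp : p ∈ Ico 0 1) :
    (1 - ρ) / μ ≤ rqDrift μ ρ p := by
  have hρμ : ρ * μ ≤ μ := mul_le_of_le_one_left hμ.le hρ.2.le
  have hinv : 1 ≤ (1 - p)⁻¹ := (one_le_inv₀ (sub_pos.2 hp.2)).2 (by linarith [hp.1])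
  exact div_le_div₀ (by linarith [hρ.2]) (by linarith) (mul_pos hρ.1 hμ) hρμ

variable {ι : Type*} {l : Filter ι} {ρ p z : ι → ℝ}

theorem eventually_mem_Ioo_of_tendsto_nhdsLT_one (hρ : Tendsto ρ l (𝓝[<] 1)) :
    ∀ᶠ i in l, ρ i ∈ Ioo 0 1 :=
  hρ.eventually_mem (Ioo_mem_nhdsLT one_pos)

theorem tendsto_one_sub_nhdsGT_zero (hρ : Tendsto ρ l (𝓝[<] 1)) :
    Tendsto (fun i => 1 - ρ i) l (𝓝[>] 0) := by
  refine tendsto_nhdsWithin_iff.2 ⟨?_, ?_⟩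
  · simpa using (hρ.mono_right nhdsWithin_le_nhds).const_sub 1
  · filter_upwards [eventually_mem_Ioo_of_tendsto_nhdsLT_one hρ] with i hi
    exact sub_pos.2 hi.2

theorem tendsto_rqDrift_div_one_sub (hμ : μ ≠ 0) (hρ : Tendsto ρ l (𝓝[<] 1))
    (hp : p =o[l] fun i => 1 - ρ i) :
    Tendsto (fun i => rqDrift μ (ρ i) (p i) / (1 - ρ i)) l (𝓝 μ⁻¹) := by
  have hρ1 : Tendsto ρ l (𝓝 1) := hρ.mono_right nhdsWithin_le_nhds
  have hε := tendsto_one_sub_nhdsGT_zero hρ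
  have hp0 : Tendsto p l (𝓝 0) := hp.trans_tendsto (hε.mono_right nhdsWithin_le_nhds)
  have hlim : Tendsto (fun i => (1 + p i / (1 - ρ i) / (1 - p i)) / (ρ i * μ)) l
      (𝓝 ((1 + 0 / (1 - 0)) / (1 * μ))) :=
    ((hp.tendsto_div_nhds_zero.div (hp0.const_sub 1) (by norm_num)).const_add 1).div
      (hρ1.mul_const μ) (by simpa using hμ)
  rw [show (1 + 0 / (1 - 0)) / (1 * μ) = μ⁻¹ by simp] at hlim
  refine hlim.congr' ?_
  filter_upwards [hε.eventually_mem self_mem_nhdsWithin, hp0.eventually_lt_const one_pos,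
    eventually_mem_Ioo_of_tendsto_nhdsLT_one hρ] with i (hεi : 0 < 1 - ρ i) hpi hρi
  have hpi' : 1 - p i ≠ 0 := (sub_pos.2 hpi).ne'
  have hρi' : ρ i ≠ 0 := hρi.1.ne'
  rw [rqDrift]
  field_simp
  ring

theorem nonneg_of_isLUB_rqObjective {ρ p z : ℝ}
    (hz : IsLUB (rqObjective Iw μ b ρ p '' Ici 0) z) : 0 ≤ z := by
  simpa [rqObjective] using hz.1 (mem_image_of_mem _ (self_mem_Ici (a := (0 : ℝ))))

theorem eventually_isLUB_rqDeviation_sub (hμ : 0 < μ) (hρ : Tendsto ρ l (𝓝[<] 1))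
    (hz : ∀ᶠ i in l, IsLUB (rqObjective Iw μ b (ρ i) (p i) '' Ici 0) (z i)) :
    ∀ᶠ i in l, IsLUB
      ((fun t => rqDeviation Iw μ b t - rqDrift μ (ρ i) (p i) * t) '' Ici 0) (z i) := by
  filter_upwards [eventually_mem_Ioo_of_tendsto_nhdsLT_one hρ, hz] with i hρi hzi
  rwa [← rqObjective_image_Ici hμ hρi.1]

theorem isBigO_inv_one_sub_of_isLUB_rqObjective (hμ : 0 < μ) (hb : 0 ≤ b)
    (hIw : Tendsto Iw atTop (𝓝 cx2)) (hρ : Tendsto ρ l (𝓝[<] 1)) (hp : ∀ᶠ i in l, p i ∈ Ico 0 1)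
    (hz : ∀ᶠ i in l, IsLUB (rqObjective Iw μ b (ρ i) (p i) '' Ici 0) (z i)) :
    z =O[l] fun i => (1 - ρ i)⁻¹ := by
  have hε : Tendsto (fun i => (1 - ρ i) / μ) l (𝓝[>] 0) := by
    obtain ⟨hlim, hpos⟩ := tendsto_nhdsWithin_iff.1 (tendsto_one_sub_nhdsGT_zero hρ)
    exact tendsto_nhdsWithin_iff.2
      ⟨by simpa using hlim.div_const μ, hpos.mono fun i hi => div_pos hi hμ⟩
  have hdrift : ∀ᶠ i in l, (1 - ρ i) / μ ≤ rqDrift μ (ρ i) (p i) := by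
    filter_upwards [eventually_mem_Ioo_of_tendsto_nhdsLT_one hρ, hp] with i hρi hpi
    exact one_sub_div_le_rqDrift hμ hρi hpi
  obtain ⟨a, ha⟩ := exists_gt ((b / μ * √cx2) ^ 2 / 4)
  refine IsBigO.of_bound (a * μ) ?_
  filter_upwards [eventually_mul_lt_of_isLUB_sub_mul (tendsto_rqDeviation_div_sqrt hIw)
      (by positivity) hε hdrift (eventually_isLUB_rqDeviation_sub hμ hρ hz) ha,
    eventually_mem_Ioo_of_tendsto_nhdsLT_one hρ, hz] with i hlt hρi hzi
  have hεi : 0 < 1 - ρ i := sub_pos.2 hρi.2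
  rw [Real.norm_of_nonneg (nonneg_of_isLUB_rqObjective hzi),
    Real.norm_of_nonneg (inv_pos.2 hεi).le, ← div_eq_mul_inv, le_div_iff₀ hεi]
  rw [div_mul_eq_mul_div, div_lt_iff₀ hμ] at hlt
  linarith

theorem tendsto_one_sub_mul_of_isLUB_rqObjective (hμ : 0 < μ) (hb : 0 < b) (hcx2 : 0 < cx2)
    (hIw : Tendsto Iw atTop (𝓝 cx2)) (hρ : Tendsto ρ l (𝓝[<] 1))
    (hp : p =o[l] fun i => 1 - ρ i)
    (hz : ∀ᶠ i in l, IsLUB (rqObjective Iw μ b (ρ i) (p i) '' Ici 0) (z i)) :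
    Tendsto (fun i => (1 - ρ i) * z i) l (𝓝 (b ^ 2 * cx2 / (4 * μ))) := by
  have hratio := tendsto_rqDrift_div_one_sub hμ.ne' hρ hp
  have hratio_pos := hratio.eventually_const_lt (inv_pos.2 hμ)
  obtain ⟨hε, hε_pos⟩ := tendsto_nhdsWithin_iff.1 (tendsto_one_sub_nhdsGT_zero hρ)
  have hdrift : Tendsto (fun i => rqDrift μ (ρ i) (p i)) l (𝓝[>] 0) := by
    refine tendsto_nhdsWithin_iff.2 ⟨?_, ?_⟩
    · rw [← mul_zero μ⁻¹]
      exact (hratio.mul hε).congr' (hε_pos.mono fun i hi => div_mul_cancel₀ _ (ne_of_gt hi))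
    · filter_upwards [hε_pos, hratio_pos] with i hi hri
      exact (div_pos_iff_of_pos_right hi).1 hri
  have hlim := (tendsto_mul_of_isLUB_sub_mul (tendsto_rqDeviation_div_sqrt hIw) (by positivity)
    hdrift (eventually_isLUB_rqDeviation_sub hμ hρ hz)).div hratio (inv_pos.2 hμ).ne'
  have hval : (b / μ * √cx2) ^ 2 / 4 / μ⁻¹ = b ^ 2 * cx2 / (4 * μ) := by
    rw [mul_pow, Real.sq_sqrt hcx2.le]
    field_simp
  rw [hval] at hlim
  refine hlim.congr' ?_
  filter_upwards [hε_pos, hdrift.eventually_mem self_mem_nhdsWithin]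
    with i (hi : 0 < 1 - ρ i) (hdi : 0 < rqDrift μ (ρ i) (p i))
  rw [Pi.div_apply]
  field_simp

end RobustQueueing

section Abandonment

theorem isBigO_pow_of_iteratedDerivWithin_eq_zero {E : Type*} [NormedAddCommGroup E]
    [NormedSpace ℝ E] {f : ℝ → E} {s : Set ℝ} {x₀ : ℝ} {n : ℕ} (hs : Convex ℝ s) (hx₀ : x₀ ∈ s)
    (hf : ContDiffOn ℝ n f s) (hf₀ : ∀ j < n, iteratedDerivWithin j f s x₀ = 0) :
    f =O[𝓝[s] x₀] fun x => (x - x₀) ^ n := by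
  have htaylor : taylorWithinEval f n s x₀
      = fun x => ((n.factorial : ℝ)⁻¹ * (x - x₀) ^ n) • iteratedDerivWithin n f s x₀ := by
    funext x
    rw [taylor_within_apply, Finset.sum_range_succ, Finset.sum_eq_zero, zero_add]
    intro j hj
    rw [hf₀ j (Finset.mem_range.1 hj), smul_zero]
  have hleading : taylorWithinEval f n s x₀ =O[𝓝[s] x₀] fun x => (x - x₀) ^ n := by
    rw [htaylor]
    refine IsBigO.of_bound (‖(n.factorial : ℝ)⁻¹‖ * ‖iteratedDerivWithin n f s x₀‖)
      (.of_forall fun x => ?_)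
    rw [norm_smul, norm_mul, mul_right_comm]
  simpa using (taylor_isLittleO hs hx₀ hf).isBigO.add hleading

theorem tendsto_rpow_nhdsGT_zero {r : ℝ} (hr : 0 < r) :
    Tendsto (fun x : ℝ => x ^ r) (𝓝[>] 0) (𝓝[>] 0) := by
  refine tendsto_nhdsWithin_iff.2 ⟨?_, ?_⟩
  · simpa [Real.zero_rpow hr.ne'] using
      (Real.continuousAt_rpow_const 0 r (Or.inr hr.le)).tendsto.mono_left nhdsWithin_le_nhds
  · filter_upwards [self_mem_nhdsWithin] with x hx
    exact Real.rpow_pos_of_pos hx r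

theorem isLittleO_rpow_rpow_nhdsGT_zero {r s : ℝ} (h : r < s) :
    (fun x : ℝ => x ^ s) =o[𝓝[>] 0] fun x => x ^ r := by
  have hpos : ∀ᶠ x : ℝ in 𝓝[>] 0, 0 < x := self_mem_nhdsWithin
  refine (isLittleO_iff_tendsto' ?_).2 ?_
  · filter_upwards [hpos] with x hx h0
    exact absurd h0 (Real.rpow_pos_of_pos hx r).ne'
  · refine ((tendsto_rpow_nhdsGT_zero (sub_pos.2 h)).mono_right nhdsWithin_le_nhds).congr' ?_
    filter_upwards [hpos] with x hx using Real.rpow_sub hx s r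

theorem isLittleO_comp_rpow_nhdsGT_zero {E : Type*} [NormedAddCommGroup E] {f : ℝ → E}
    {w : ℝ → ℝ} {q r κ : ℝ} (hf : f =O[𝓝[≥] 0] fun x => x ^ κ) (hκ : 0 ≤ κ)
    (hw₀ : ∀ᶠ x in 𝓝[>] 0, 0 ≤ w x) (hw : w =O[𝓝[>] 0] fun x => x ^ q) (hq : 0 < q)
    (hr : r < q * κ) :
    (fun x => f (w x)) =o[𝓝[>] 0] fun x => x ^ r := by
  have hpos : ∀ᶠ x : ℝ in 𝓝[>] 0, 0 < x := self_mem_nhdsWithin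
  have hw_lim : Tendsto w (𝓝[>] 0) (𝓝[≥] 0) := tendsto_nhdsWithin_iff.2
    ⟨hw.trans_tendsto ((tendsto_rpow_nhdsGT_zero hq).mono_right nhdsWithin_le_nhds), hw₀⟩
  have hq₀ : 0 ≤ᶠ[𝓝[>] 0] fun x : ℝ => x ^ q := hpos.mono fun x hx => Real.rpow_nonneg hx.le q
  have hrpow : (fun x : ℝ => (x ^ q) ^ κ) =ᶠ[𝓝[>] 0] fun x => x ^ (q * κ) :=
    hpos.mono fun x hx => (Real.rpow_mul hx.le q κ).symm
  exact ((hf.comp_tendsto hw_lim).trans ((hw.rpow hκ hq₀).trans_eventuallyEq hrpow)).trans_isLittleO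
    (isLittleO_rpow_rpow_nhdsGT_zero hr)

end Abandonment

theorem tendsto_one_add_mul_rpow_nhdsLT_one {γ c : ℝ} (hγ : 0 < γ) (hc : c < 0) :
    Tendsto (fun α : ℝ => 1 + c * α ^ γ) (𝓝[>] 0) (𝓝[<] 1) := by
  have hγ₀ := tendsto_rpow_nhdsGT_zero hγ
  refine tendsto_nhdsWithin_iff.2 ⟨?_, ?_⟩
  · simpa using ((hγ₀.mono_right nhdsWithin_le_nhds).const_mul c).const_add 1
  · filter_upwards [hγ₀.eventually_mem self_mem_nhdsWithin] with α (hα : 0 < α ^ γ)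
    exact add_lt_of_neg_right 1 (mul_neg_of_neg_of_pos hc hα)

theorem isLittleO_comp_mul_of_isLUB_rqObjective {F Iw Z : ℝ → ℝ} {μ b cx2 γ c κ : ℝ} (hκ : 0 < κ)
    (hF : F =O[𝓝[≥] 0] fun x => x ^ κ) (hF_range : ∀ x, 0 ≤ x → F x ∈ Ico 0 1)
    (hIw : Tendsto Iw atTop (𝓝 cx2)) (hμ : 0 < μ) (hb : 0 ≤ b) (hγ : 0 < γ) (hc : c < 0)
    (hγκ : γ < κ / (κ + 1))
    (hZ : ∀ᶠ α in 𝓝[>] (0 : ℝ),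
      IsLUB (rqObjective Iw μ b (1 + c * α ^ γ) (F (α * Z α)) '' Ici 0) (Z α)) :
    (fun α => F (α * Z α)) =o[𝓝[>] 0] fun α => α ^ γ := by
  have hpos : ∀ᶠ α : ℝ in 𝓝[>] 0, 0 < α := self_mem_nhdsWithin
  have hw₀ : ∀ᶠ α in 𝓝[>] 0, 0 ≤ α * Z α := by
    filter_upwards [hpos, hZ] with α hα hZα
    exact mul_nonneg hα.le (nonneg_of_isLUB_rqObjective hZα)
  have hZO := isBigO_inv_one_sub_of_isLUB_rqObjective hμ hb hIw
    (tendsto_one_add_mul_rpow_nhdsLT_one hγ hc) (hw₀.mono fun α => hF_range _) hZ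
  have hw : (fun α => α * Z α) =O[𝓝[>] 0] fun α => α ^ (1 - γ) := by
    have hrate : (fun α => α * (1 - (1 + c * α ^ γ))⁻¹) =ᶠ[𝓝[>] 0]
        fun α => (-c)⁻¹ * α ^ (1 - γ) := by
      filter_upwards [hpos] with α hα
      rw [sub_add_cancel_left, ← neg_mul, mul_inv, Real.rpow_sub hα, Real.rpow_one]
      ring
    exact (((isBigO_refl id _).mul hZO).trans_eventuallyEq hrate).trans
      (isBigO_const_mul_self _ _ _)
  have hγκ' : γ * (κ + 1) < κ := (lt_div_iff₀ (by linarith)).1 hγκ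
  exact isLittleO_comp_rpow_nhdsGT_zero hF hκ.le hw₀ hw (by nlinarith) (by linarith)

theorem rq_heavy_traffic_underloaded_general {κ : ℝ} (hκ : 0 < κ) {F : ℝ → ℝ}
    (hF : F =O[𝓝[≥] 0] fun x => x ^ κ) (hF_range : ∀ x, 0 ≤ x → 0 ≤ F x ∧ F x < 1)
    {Iw : ℝ → ℝ} (_hIw_nonneg : ∀ t, 0 ≤ t → 0 ≤ Iw t) {cx2 : ℝ} (hcx2 : 0 < cx2)
    (hIw_lim : Tendsto Iw atTop (𝓝 cx2)) {μ b γ c : ℝ} (hμ : 0 < μ) (hb : 0 < b) (hγ : 0 < γ)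
    (hc : c < 0) (hγκ : γ < κ / (κ + 1)) {Z : ℝ → ℝ}
    (hZ : ∀ᶠ α in 𝓝[>] (0 : ℝ),
      (Z α : EReal) = ⨆ u : {u : ℝ // 0 ≤ u},
        (((1 + c * α ^ γ) * (u : ℝ) - (u : ℝ) / (1 - F (α * Z α))
          + b * √((1 + c * α ^ γ) * (u : ℝ)
              * Iw ((1 + c * α ^ γ) * μ * (u : ℝ)) / μ) : ℝ) : EReal)) :
    Tendsto (fun α : ℝ => (-c) * μ * α ^ γ * Z α) (𝓝[>] 0) (𝓝 (b ^ 2 * cx2 / 4)) ∧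
    Tendsto (fun α : ℝ => (1 - (1 + c * α ^ γ)) * Z α) (𝓝[>] 0) (𝓝 (b ^ 2 * cx2 / (4 * μ))) := by
  have hLUB : ∀ᶠ α in 𝓝[>] (0 : ℝ),
      IsLUB (rqObjective Iw μ b (1 + c * α ^ γ) (F (α * Z α)) '' Ici 0) (Z α) := by
    filter_upwards [hZ] with α hZα
    rw [image_eq_range]
    exact isLUB_range_of_coe_eq_iSup hZα
  have hFZ : (fun α => F (α * Z α)) =o[𝓝[>] 0] fun α => 1 - (1 + c * α ^ γ) := by
    simpa [isLittleO_const_mul_right_iff hc.ne] using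
      isLittleO_comp_mul_of_isLUB_rqObjective hκ hF hF_range hIw_lim hμ hb.le hγ hc hγκ hLUB
  have hlim := tendsto_one_sub_mul_of_isLUB_rqObjective hμ hb hcx2 hIw_lim
    (tendsto_one_add_mul_rpow_nhdsLT_one hγ hc) hFZ hLUB
  refine ⟨?_, hlim⟩
  have hμlim := hlim.const_mul μ
  rw [show μ * (b ^ 2 * cx2 / (4 * μ)) = b ^ 2 * cx2 / 4 by field_simp] at hμlim
  exact hμlim.congr fun α => by ring

/-- heavy-traffic limit of the RQ fixed point in the underloaded regime
(`c < 0`, `0 < γ < h = k/(k+1)`).  `F` is the patience CDF (with scaling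
`F_α(x) = F(α x)`), `I_w` is the continuous bounded index of dispersion for work with
limit `c_x²`, `ρ(α) = 1 + c α^γ`, `λ(α) = ρ(α) μ`, and `Z α ≥ 0` solves the
steady-state RQ fixed-point equation for all sufficiently small `α > 0`.  Then
`(-c) μ α^γ Z(α) → b² c_x² / 4`, equivalently `(1 - ρ(α)) Z(α) → b² c_x² / (4 μ)`. -/
theorem rq_heavy_traffic_underloaded
    (k : ℕ) (hk : 1 ≤ k)
    (F : ℝ → ℝ)
    (hF_mono : Monotone F)
    (hF_zero : ∀ x ≤ (0 : ℝ), F x = 0)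
    (hF_range : ∀ x, 0 ≤ x → 0 ≤ F x ∧ F x < 1)
    (hF_lim : Tendsto F atTop (𝓝 1))
    (hF_smooth : ContDiffOn ℝ k F (Set.Ici 0))
    (hF_derivs : ∀ j < k, iteratedDerivWithin j F (Set.Ici 0) 0 = 0)
    (hF_k : 0 < iteratedDerivWithin k F (Set.Ici 0) 0)
    (Iw : ℝ → ℝ) (hIw_cont : Continuous Iw)
    (hIw_nonneg : ∀ t, 0 ≤ t → 0 ≤ Iw t)
    (hIw_bdd : ∃ C : ℝ, ∀ t, 0 ≤ t → Iw t ≤ C)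
    (cx2 : ℝ) (hcx2 : 0 < cx2)
    (hIw_lim : Tendsto Iw atTop (𝓝 cx2))
    (μ b γ c : ℝ) (hμ : 0 < μ) (hb : 0 < b) (hγ : 0 < γ)
    (hc : c < 0) (hγh : γ < (k : ℝ) / (k + 1))
    (Z : ℝ → ℝ)
    (hZ : ∀ᶠ α in 𝓝[>] (0 : ℝ),
      0 ≤ Z α ∧
      (Z α : EReal) = ⨆ u : {u : ℝ // 0 ≤ u},
        (((1 + c * α ^ γ) * (u : ℝ) - (u : ℝ) / (1 - F (α * Z α))
          + b * Real.sqrt ((1 + c * α ^ γ) * (u : ℝ)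
              * Iw ((1 + c * α ^ γ) * μ * (u : ℝ)) / μ) : ℝ) : EReal)) :
    Tendsto (fun α : ℝ => (-c) * μ * α ^ γ * Z α)
      (𝓝[>] (0 : ℝ)) (𝓝 (b ^ 2 * cx2 / 4)) ∧
    Tendsto (fun α : ℝ => (1 - (1 + c * α ^ γ)) * Z α)
      (𝓝[>] (0 : ℝ)) (𝓝 (b ^ 2 * cx2 / (4 * μ))) := by
  have hF : F =O[𝓝[≥] 0] fun x => x ^ (k : ℝ) := by
    simpa using isBigO_pow_of_iteratedDerivWithin_eq_zero (convex_Ici 0) self_mem_Ici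
      hF_smooth hF_derivs
  exact rq_heavy_traffic_underloaded_general (by positivity) hF hF_range hIw_nonneg hcx2 hIw_lim
    hμ hb hγ hc hγh (hZ.mono fun _ h => h.2)
end

section
/- For every integer k ≥ 1 and every real a > 0, lim_{c → −∞} b(c) = √2, where ψ(c) = [∫_0^∞ x·exp(cx − a·x^{k+1}/(k+1)!) dx]/[∫_0^∞ exp(cx − a·x^{k+1}/(k+1)!) dx] and b(c) = √(2·|−c·ψ(c) + (a/k!)·ψ(c)^{k+1}|). -/
open Filter Set Topology MeasureTheory

/-- The heavy-traffic limiting constant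
`ψ(c) = ∫_0^∞ x e^{c x - a x^{k+1}/(k+1)!} dx / ∫_0^∞ e^{c x - a x^{k+1}/(k+1)!} dx`. -/
noncomputable def psiHT (k : ℕ) (a c : ℝ) : ℝ :=
  (∫ x in Set.Ioi (0 : ℝ),
      x * Real.exp (c * x - a * x ^ (k + 1) / (Nat.factorial (k + 1)))) /
  (∫ x in Set.Ioi (0 : ℝ),
      Real.exp (c * x - a * x ^ (k + 1) / (Nat.factorial (k + 1))))

/-!
As `t = -c → ∞`, the weight `e^{-t x}` concentrates near `0`, where the patience factor
`e^{-a x^{k+1}/(k+1)!}` is close to `1`. Hence `ψ(c)` is asymptotic to the mean `1 / t` of the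
exponential law of rate `t`; that is, `-c ψ(c) → 1`, while `ψ(c)^{k+1} → 0`. The comparison is
an Abelian theorem for the Laplace transform: if `g` is bounded and `g(x) → ℓ` as `x → 0⁺`, then
`∫_0^∞ e^{-t x} x^{s-1} g(x) dx ∼ Γ(s) ℓ t^{-s}`. Substituting `x = y / t` reduces it to
dominated convergence.
-/

theorem quasiMeasurePreserving_mul_left_Ioi {r : ℝ} (hr : 0 < r) :
    Measure.QuasiMeasurePreserving (r * ·) (volume.restrict (Ioi 0))
      (volume.restrict (Ioi 0)) := by
  have h : Measure.QuasiMeasurePreserving (r * ·) (volume : Measure ℝ) volume :=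
    ⟨measurable_const_mul r, by
      rw [Real.map_volume_mul_left hr.ne']
      exact Measure.smul_absolutelyContinuous⟩
  exact h.restrict fun x hx => mul_pos hr hx

section LaplaceTransform

variable {E : Type*} [NormedAddCommGroup E] [NormedSpace ℝ E]

/-- The one-sided Laplace transform `t ↦ ∫_0^∞ e^{-t x} f(x) dx`, used for the numerator and the
denominator of `psiHT`. It is a Bochner integral, hence `0` where the integrand is not
integrable. -/
noncomputable def laplaceTransform (f : ℝ → E) (t : ℝ) : E :=
  ∫ x in Ioi (0 : ℝ), Real.exp (-(t * x)) • f x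

theorem laplaceTransform_comp_mul_left (f : ℝ → E) (t : ℝ) {r : ℝ} (hr : 0 < r) :
    laplaceTransform (fun x => f (r * x)) (r * t) = r⁻¹ • laplaceTransform f t := by
  have h := integral_comp_mul_left_Ioi (fun x => Real.exp (-(t * x)) • f x) 0 hr
  rw [mul_zero] at h
  rw [laplaceTransform, laplaceTransform, ← h]
  simp only [mul_left_comm t r, mul_assoc]

theorem rpow_smul_laplaceTransform_rpow_smul (g : ℝ → E) (s : ℝ) {t : ℝ} (ht : 0 < t) :
    t ^ s • laplaceTransform (fun x => x ^ (s - 1) • g x) t =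
      laplaceTransform (fun y => y ^ (s - 1) • g (t⁻¹ * y)) 1 := by
  have hscale := laplaceTransform_comp_mul_left
    (fun y => y ^ (s - 1) • g (t⁻¹ * y)) 1 ht
  rw [mul_one, ← inv_smul_eq_iff₀ (inv_ne_zero ht.ne'), inv_inv] at hscale
  rw [← hscale, laplaceTransform, laplaceTransform, ← integral_smul, ← integral_smul]
  refine setIntegral_congr_fun measurableSet_Ioi fun x (hx : 0 < x) => ?_
  have hpow : t ^ s = t * t ^ (s - 1) := by
    rw [Real.rpow_sub_one ht.ne', mul_div_cancel₀ _ ht.ne']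
  simp only [smul_smul, inv_mul_cancel_left₀ ht.ne', Real.mul_rpow ht.le hx.le, hpow]
  ring_nf

variable [CompleteSpace E]

theorem laplaceTransform_rpow_smul_const_one {s : ℝ} (hs : 0 < s) (v : E) :
    laplaceTransform (fun x => x ^ (s - 1) • v) 1 = Real.Gamma s • v := by
  simp only [laplaceTransform, one_mul, smul_smul, integral_smul_const,
    Real.Gamma_eq_integral hs]

theorem tendsto_rpow_smul_laplaceTransform_rpow_smul {g : ℝ → E} {ℓ : E} {s C : ℝ} (hs : 0 < s)
    (hg : AEStronglyMeasurable g (volume.restrict (Ioi 0)))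
    (hgC : ∀ᵐ x ∂volume.restrict (Ioi (0 : ℝ)), ‖g x‖ ≤ C)
    (hgℓ : Tendsto g (𝓝[>] 0) (𝓝 ℓ)) :
    Tendsto (fun t => t ^ s • laplaceTransform (fun x => x ^ (s - 1) • g x) t)
      atTop (𝓝 (Real.Gamma s • ℓ)) := by
  suffices h : Tendsto (fun t : ℝ => laplaceTransform (fun y => y ^ (s - 1) • g (t⁻¹ * y)) 1)
      atTop (𝓝 (Real.Gamma s • ℓ)) from
    h.congr' <| (eventually_gt_atTop 0).mono fun t ht =>
      (rpow_smul_laplaceTransform_rpow_smul g s ht).symm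
  rw [← laplaceTransform_rpow_smul_const_one hs]
  simp only [laplaceTransform, one_mul, smul_smul]
  refine tendsto_integral_filter_of_dominated_convergence
    (fun y => Real.exp (-y) * y ^ (s - 1) * C) ?measurable ?bound
    ((Real.GammaIntegral_convergent hs).mul_const C) ?limit
  case measurable =>
    filter_upwards [eventually_gt_atTop 0] with t ht
    exact (Measurable.aestronglyMeasurable (by fun_prop)).smul <|
      hg.comp_quasiMeasurePreserving (quasiMeasurePreserving_mul_left_Ioi (inv_pos.mpr ht))
  case bound =>
    filter_upwards [eventually_gt_atTop 0] with t ht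
    filter_upwards [ae_restrict_mem measurableSet_Ioi,
      (quasiMeasurePreserving_mul_left_Ioi (inv_pos.mpr ht)).ae hgC] with y (hy : 0 < y) hgy
    rw [norm_smul, Real.norm_of_nonneg (by positivity)]
    gcongr
  case limit =>
    filter_upwards [ae_restrict_mem measurableSet_Ioi] with y (hy : 0 < y)
    have hright : Tendsto (fun t : ℝ => t⁻¹ * y) atTop (𝓝[>] 0) :=
      tendsto_nhdsWithin_iff.mpr
        ⟨by simpa using tendsto_inv_atTop_zero.mul_const y,
          (eventually_gt_atTop 0).mono fun t ht => mul_pos (inv_pos.mpr ht) hy⟩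
    exact (hgℓ.comp hright).const_smul _

end LaplaceTransform

theorem tendsto_mul_laplaceTransform_rpow_div {g : ℝ → ℝ} {ℓ s C : ℝ} (hs : 0 < s)
    (hg : AEStronglyMeasurable g (volume.restrict (Ioi 0)))
    (hgC : ∀ᵐ x ∂volume.restrict (Ioi (0 : ℝ)), ‖g x‖ ≤ C)
    (hgℓ : Tendsto g (𝓝[>] 0) (𝓝 ℓ)) (hℓ : ℓ ≠ 0) :
    Tendsto (fun t => t * (laplaceTransform (fun x => x ^ s * g x) t /
      laplaceTransform (fun x => x ^ (s - 1) * g x) t)) atTop (𝓝 s) := by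
  have hnum := tendsto_rpow_smul_laplaceTransform_rpow_smul (add_pos hs one_pos) hg hgC hgℓ
  have hden := tendsto_rpow_smul_laplaceTransform_rpow_smul hs hg hgC hgℓ
  have hΓ : Real.Gamma s ≠ 0 := (Real.Gamma_pos_of_pos hs).ne'
  have hratio := hnum.div hden (smul_ne_zero hΓ hℓ)
  simp only [add_sub_cancel_right, smul_eq_mul, Real.Gamma_add_one hs.ne', mul_assoc,
    mul_div_cancel_right₀ s (mul_ne_zero hΓ hℓ)] at hratio
  refine hratio.congr' ?_
  filter_upwards [eventually_gt_atTop 0] with t ht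
  rw [Pi.div_apply, Real.rpow_add_one ht.ne', mul_assoc,
    mul_div_mul_left _ _ (Real.rpow_pos_of_pos ht s).ne', mul_div_assoc]

section HeavyTraffic

/-- The limiting patience factor `e^{-a x^{k+1}/(k+1)!}` in the integrals that define `psiHT`;
the remaining factor `e^{c x}` is the kernel of the Laplace transform at `-c`. -/
noncomputable def patienceFactor (k : ℕ) (a x : ℝ) : ℝ :=
  Real.exp (-(a * x ^ (k + 1) / (Nat.factorial (k + 1))))

variable (k : ℕ) (a : ℝ)

theorem continuous_patienceFactor : Continuous (patienceFactor k a) := by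
  unfold patienceFactor
  fun_prop

theorem patienceFactor_zero : patienceFactor k a 0 = 1 := by
  simp [patienceFactor]

theorem psiHT_eq_laplaceTransform_div (c : ℝ) :
    psiHT k a c = laplaceTransform (fun x => x * patienceFactor k a x) (-c) /
      laplaceTransform (patienceFactor k a) (-c) := by
  simp only [psiHT, laplaceTransform, patienceFactor, smul_eq_mul, neg_mul, neg_neg,
    mul_left_comm (Real.exp _), ← Real.exp_add, ← sub_eq_add_neg]

variable {a}

theorem norm_patienceFactor_le_one (ha : 0 ≤ a) {x : ℝ} (hx : 0 ≤ x) :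
    ‖patienceFactor k a x‖ ≤ 1 := by
  rw [patienceFactor, Real.norm_of_nonneg (Real.exp_nonneg _), Real.exp_le_one_iff, neg_nonpos]
  positivity

theorem tendsto_neg_mul_psiHT_atBot (ha : 0 ≤ a) :
    Tendsto (fun c => -c * psiHT k a c) atBot (𝓝 1) := by
  have hcont := continuous_patienceFactor k a
  have hmean := tendsto_mul_laplaceTransform_rpow_div one_pos hcont.aestronglyMeasurable
    ((ae_restrict_mem measurableSet_Ioi).mono fun x hx =>
      norm_patienceFactor_le_one k ha (le_of_lt hx))
    (hcont.continuousWithinAt (x := 0)).tendsto (by simp [patienceFactor_zero])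
  simp only [Real.rpow_one, sub_self, Real.rpow_zero, one_mul] at hmean
  simpa only [psiHT_eq_laplaceTransform_div, Function.comp_def] using
    hmean.comp tendsto_neg_atBot_atTop

theorem tendsto_psiHT_atBot (ha : 0 ≤ a) : Tendsto (psiHT k a) atBot (𝓝 0) := by
  refine ((tendsto_neg_mul_psiHT_atBot k ha).div_atTop tendsto_neg_atBot_atTop).congr' ?_
  filter_upwards [eventually_lt_atBot 0] with c hc
  exact mul_div_cancel_left₀ _ (neg_ne_zero.mpr hc.ne)

end HeavyTraffic

/-- the calibrated robustness parameter
`b(c) = √(2 |-c ψ(c) + (a/k!) ψ(c)^{k+1}|)` satisfies `b(c) → √2` as `c → -∞`. -/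
theorem calibration_b_tendsto_sqrt_two
    (k : ℕ) (hk : 1 ≤ k) (a : ℝ) (ha : 0 < a) :
    Tendsto (fun c : ℝ =>
        Real.sqrt (2 * |(-c) * psiHT k a c
          + a / (Nat.factorial k) * (psiHT k a c) ^ (k + 1)|))
      atBot (𝓝 (Real.sqrt 2)) := by
  have hlinear : Tendsto (fun c => -c * psiHT k a c) atBot (𝓝 1) :=
    tendsto_neg_mul_psiHT_atBot k ha.le
  have hpower : Tendsto (fun c => a / (Nat.factorial k) * (psiHT k a c) ^ (k + 1))
      atBot (𝓝 0) := by
    simpa using ((tendsto_psiHT_atBot k ha.le).pow (k + 1)).const_mul (a / Nat.factorial k)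
  simpa using ((hlinear.add hpower).abs.const_mul 2).sqrt
end
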